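/- arXiv:2004.11231 — 4 statements merged into one kernel-verified Lean document; each statement's English description precedes it below -/
import Mathlib

section
/- (Unbiasedness of the exploration-scaled CG-DSGLD estimator.) Let S, d, m be positive integers, f : Fin S → ℝ with f s > 0 and ∑_s f s = 1, for each s let N_s be a positive integer and v_{s,1}, …, v_{s,N_s} ∈ ℝ^d, let u_1, …, u_S ∈ ℝ^d, and let α ∈ ℝ. Then ∑_{s=1}^{S} f s · (1/N_s^m) ∑_{φ : Fin m → Fin N_s} [ (N_s/(f s · m)) ∑_{j=1}^{m} v_{s, φ(j)} + α·( ∑_{s'=1}^{S} u_{s'} − (1/(f s)) u_s ) ] = ∑_{s=1}^{S} ∑_{i=1}^{N_s} v_{s,i}. -/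
/-- Unbiasedness of the exploration-scaled CG-DSGLD estimator: scaling the
conducive gradient by any constant `α` preserves unbiasedness of the estimator of
the full-data gradient. -/
theorem cgdsgld_alpha_unbiased (S d m : ℕ) (hS : 0 < S) (hd : 0 < d) (hm : 0 < m)
    (f : Fin S → ℝ) (hf : ∀ s, 0 < f s) (hsum : ∑ s, f s = 1)
    (N : Fin S → ℕ) (hN : ∀ s, 0 < N s)
    (v : (s : Fin S) → Fin (N s) → EuclideanSpace ℝ (Fin d))
    (u : Fin S → EuclideanSpace ℝ (Fin d)) (α : ℝ) :
    ∑ s, f s • ((1 / (N s : ℝ) ^ m) •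
        ∑ φ : Fin m → Fin (N s),
          (((N s : ℝ) / (f s * m)) • ∑ j, v s (φ j))
            + α • ((∑ s', u s') - (1 / f s) • u s))
      = ∑ s, ∑ i, v s i := by
  have key : ∀ s, f s • ((1 / (N s : ℝ) ^ m) •
        ∑ φ : Fin m → Fin (N s),
          (((N s : ℝ) / (f s * m)) • ∑ j, v s (φ j))
            + α • ((∑ s', u s') - (1 / f s) • u s))
      = ∑ i, v s i + (f s • (α • ∑ s', u s') - α • u s) := by
    intro s
    have hfs : f s ≠ 0 := (hf s).ne'
    have hNs : (N s : ℝ) ≠ 0 := by exact_mod_cast (hN s).ne'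
    have hm' : (m : ℝ) ≠ 0 := by exact_mod_cast hm.ne'
    have h1 : ∑ φ : Fin m → Fin (N s), ∑ j, v s (φ j)
        = ((m : ℝ) * (N s : ℝ) ^ (m - 1)) • ∑ i, v s i := by
      rw [Finset.sum_comm]
      have h2 : ∀ j : Fin m, ∑ φ : Fin m → Fin (N s), v s (φ j)
          = ((N s : ℝ) ^ (m - 1)) • ∑ i, v s i := by
        intro j
        have h3 := Fintype.sum_piFinset_apply (v s) Finset.univ j
        simp only [Fintype.piFinset_univ, Finset.card_univ, Fintype.card_fin] at h3
        rw [h3, ← Nat.cast_smul_eq_nsmul ℝ]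
        push_cast
        rfl
      simp only [h2, Finset.sum_const, Finset.card_univ, Fintype.card_fin]
      rw [← Nat.cast_smul_eq_nsmul ℝ, smul_smul]
    have hp : (N s : ℝ) ^ m = (N s : ℝ) ^ (m - 1) * N s := by
      rw [← pow_succ, Nat.sub_add_cancel hm]
    rw [← Finset.smul_sum, h1, smul_add, smul_smul, smul_smul, smul_smul]
    congr 1
    · rw [hp]
      have : f s * (1 / ((N s : ℝ) ^ (m - 1) * N s) * (N s / (f s * m) * (m * (N s : ℝ) ^ (m - 1)))) = 1 := by
        field_simp
      first
        | rw [this, one_smul]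
        | (simp only [← mul_assoc] at this ⊢; rw [this, one_smul])
    · rw [smul_sub, smul_sub, smul_comm α, smul_smul (f s) (1 / f s), mul_one_div_cancel hfs, one_smul]
  rw [Finset.sum_congr rfl fun s _ => key s, Finset.sum_add_distrib, Finset.sum_sub_distrib,
    ← Finset.sum_smul, hsum, one_smul, ← Finset.smul_sum, sub_self, add_zero]
end

section
/- (Variance bound for the DSGLD gradient estimator; core of Theorem 1.) Let S, d, m be positive integers, f : Fin S → ℝ with f s > 0 and ∑_s f s = 1, for each s let N_s be a positive integer and v_{s,1}, …, v_{s,N_s} ∈ ℝ^d with ‖v_{s,i}‖ ≤ γ_s for all i, and let V = ∑_{s=1}^{S} ∑_{i=1}^{N_s} v_{s,i}. Consider m independent draws, where each draw j selects a shard s_j with probability f_{s_j} and then an index i_j uniformly from {1, …, N_{s_j}}. Then the expected squared deviation of the estimator from the full-data gradient satisfies E‖ (1/m) ∑_{j=1}^{m} (N_{s_j}/(f_{s_j})) v_{s_j, i_j} − V ‖² ≤ (1/m) ∑_{s=1}^{S} (N_s²/(f s)) γ_s². -/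
open Finset in
lemma dsgld_aux {α E : Type*} [Fintype α] [NormedAddCommGroup E] [InnerProductSpace ℝ E]
    (p : α → ℝ) (Y : α → E) (hp : ∑ a, p a = 1) (hY : ∑ a, p a • Y a = 0) (m : ℕ) :
    ∑ ω : Fin m → α, (∏ j, p (ω j)) * ‖∑ j, Y (ω j)‖ ^ 2 = m * ∑ a, p a * ‖Y a‖ ^ 2 := by
  induction m with
  | zero => simp
  | succ n ih =>
    have h1 : ∑ ω : Fin n → α, (∏ j, p (ω j)) = 1 := by
      have := Fintype.sum_pow p n
      rw [hp] at this
      simpa using this.symm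
    rw [← (Fin.consEquiv (fun _ : Fin (n+1) => α)).sum_comp, Fintype.sum_prod_type]
    simp only [Fin.consEquiv_apply, Fin.prod_univ_succ, Fin.sum_univ_succ, Fin.cons_zero,
      Fin.cons_succ]
    have h2 : ∀ a : α, ∀ ω : Fin n → α,
        p a * (∏ j, p (ω j)) * ‖Y a + ∑ j, Y (ω j)‖ ^ 2
        = (p a * ‖Y a‖ ^ 2) * (∏ j, p (ω j))
          + 2 * ((∏ j, p (ω j)) * inner ℝ (p a • Y a) (∑ j, Y (ω j)))
          + p a * ((∏ j, p (ω j)) * ‖∑ j, Y (ω j)‖ ^ 2) := by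
      intro a ω
      rw [norm_add_sq_real, real_inner_smul_left]
      ring
    simp only [h2, Finset.sum_add_distrib]
    have h3 : ∑ a, ∑ ω : Fin n → α,
        2 * ((∏ j, p (ω j)) * inner ℝ (p a • Y a) (∑ j, Y (ω j))) = 0 := by
      rw [Finset.sum_comm]
      apply Finset.sum_eq_zero
      intro ω _
      rw [← Finset.mul_sum, ← Finset.mul_sum, ← sum_inner, hY]
      simp
    rw [h3]
    simp only [← Finset.mul_sum, h1, ih, ← Finset.sum_mul, hp]
    push_cast
    ring

/-- Variance bound for the DSGLD gradient estimator (core of Theorem 1). Each of the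
`m` mini-batch elements is an independent draw `ω j = ⟨s_j, i_j⟩` that selects a
shard `s_j` with probability `f s_j` and then an index `i_j` uniformly within the
shard; the expectation is the corresponding finite weighted average over all tuples
of draws. -/
theorem dsgld_variance_bound (S d m : ℕ) (hS : 0 < S) (hd : 0 < d) (hm : 0 < m)
    (f : Fin S → ℝ) (hf : ∀ s, 0 < f s) (hsum : ∑ s, f s = 1)
    (N : Fin S → ℕ) (hN : ∀ s, 0 < N s)
    (v : (s : Fin S) → Fin (N s) → EuclideanSpace ℝ (Fin d))
    (γ : Fin S → ℝ) (hγ : ∀ s i, ‖v s i‖ ≤ γ s)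
    (V : EuclideanSpace ℝ (Fin d)) (hV : V = ∑ s, ∑ i, v s i) :
    ∑ ω : Fin m → Σ s : Fin S, Fin (N s),
        (∏ j, f (ω j).1 * (1 / (N (ω j).1 : ℝ))) *
          ‖(1 / (m : ℝ)) • (∑ j, ((N (ω j).1 : ℝ) / f (ω j).1) • v (ω j).1 (ω j).2)
            - V‖ ^ 2
      ≤ (1 / (m : ℝ)) * ∑ s, ((N s : ℝ) ^ 2 / f s) * γ s ^ 2 := by
  have hm' : (m : ℝ) ≠ 0 := by positivity
  have hN' : ∀ s, (N s : ℝ) ≠ 0 := fun s => by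
    have := hN s
    positivity
  let p : (Σ s : Fin S, Fin (N s)) → ℝ := fun a => f a.1 * (1 / (N a.1 : ℝ))
  let X : (Σ s : Fin S, Fin (N s)) → EuclideanSpace ℝ (Fin d) :=
    fun a => ((N a.1 : ℝ) / f a.1) • v a.1 a.2
  have hp : ∑ a, p a = 1 := by
    rw [Fintype.sum_sigma, ← hsum]
    apply Finset.sum_congr rfl
    intro s _
    have := hN' s
    simp only [p, Finset.sum_const, Finset.card_univ, Fintype.card_fin, nsmul_eq_mul]
    field_simp
  have hX : ∑ a, p a • X a = V := by
    rw [Fintype.sum_sigma, hV]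
    refine Finset.sum_congr rfl fun s _ => Finset.sum_congr rfl fun i _ => ?_
    have h1 := hN' s
    have h2 := (hf s).ne'
    simp only [p, X, smul_smul]
    have : f s * (1 / (N s : ℝ)) * (N s / f s) = 1 := by field_simp
    rw [this, one_smul]
  have hY : ∑ a, p a • (X a - V) = 0 := by
    simp only [smul_sub, Finset.sum_sub_distrib, ← Finset.sum_smul, hX, hp, one_smul, sub_self]
  have key := dsgld_aux p (fun a => X a - V) hp hY m
  have hrew : ∀ ω : Fin m → Σ s : Fin S, Fin (N s),
      ‖(1 / (m : ℝ)) • (∑ j, X (ω j)) - V‖ ^ 2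
        = (1 / (m : ℝ)) ^ 2 * ‖∑ j, (X (ω j) - V)‖ ^ 2 := by
    intro ω
    have : (1 / (m : ℝ)) • (∑ j, X (ω j)) - V = (1 / (m : ℝ)) • ∑ j, (X (ω j) - V) := by
      rw [Finset.sum_sub_distrib, smul_sub]
      congr 1
      simp only [Finset.sum_const, Finset.card_univ, Fintype.card_fin]
      rw [← Nat.cast_smul_eq_nsmul ℝ, smul_smul, one_div_mul_cancel hm', one_smul]
    rw [this, norm_smul, mul_pow, Real.norm_eq_abs, sq_abs]
  have hvar : ∑ a, p a * ‖X a - V‖ ^ 2 ≤ ∑ a, p a * ‖X a‖ ^ 2 := by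
    have h : ∀ a, p a * ‖X a - V‖ ^ 2
        = p a * ‖X a‖ ^ 2 - 2 * inner ℝ (p a • X a) V + p a * ‖V‖ ^ 2 := by
      intro a
      rw [norm_sub_sq_real, real_inner_smul_left (X a) V (p a)]
      ring
    simp only [h, Finset.sum_add_distrib, Finset.sum_sub_distrib, ← Finset.mul_sum,
      ← Finset.sum_mul, ← sum_inner, hX, hp, real_inner_self_eq_norm_sq]
    nlinarith [sq_nonneg ‖V‖]
  have hbd : ∑ a, p a * ‖X a‖ ^ 2 ≤ ∑ s, ((N s : ℝ) ^ 2 / f s) * γ s ^ 2 := by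
    rw [Fintype.sum_sigma]
    refine Finset.sum_le_sum fun s _ => ?_
    have h1 := hN' s
    have h2 := hf s
    have h3 : ∀ i, p ⟨s, i⟩ * ‖X ⟨s, i⟩‖ ^ 2 ≤ ((N s : ℝ) / f s) * γ s ^ 2 := by
      intro i
      have h4 : p ⟨s, i⟩ * ‖X ⟨s, i⟩‖ ^ 2 = ((N s : ℝ) / f s) * ‖v s i‖ ^ 2 := by
        simp only [p, X]
        rw [norm_smul, mul_pow, Real.norm_eq_abs, sq_abs]
        field_simp
      rw [h4]
      have := hγ s i
      gcongr
    refine (Finset.sum_le_sum fun i _ => h3 i).trans (le_of_eq ?_)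
    simp only [Finset.sum_const, Finset.card_univ, Fintype.card_fin, nsmul_eq_mul]
    ring
  calc _ = ∑ ω : Fin m → Σ s : Fin S, Fin (N s),
        (∏ j, p (ω j)) * ‖(1 / (m : ℝ)) • (∑ j, X (ω j)) - V‖ ^ 2 := rfl
    _ = (1 / (m : ℝ)) ^ 2 * ∑ ω : Fin m → Σ s : Fin S, Fin (N s),
        (∏ j, p (ω j)) * ‖∑ j, (X (ω j) - V)‖ ^ 2 := by
      rw [Finset.mul_sum]
      refine Finset.sum_congr rfl fun ω _ => ?_
      rw [hrew]
      ring
    _ = (1 / (m : ℝ)) * ∑ a, p a * ‖X a - V‖ ^ 2 := by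
      rw [key]
      field_simp
    _ ≤ _ := by
      have := hvar.trans hbd
      gcongr
end

section
/- (Variance bound for the CG-DSGLD gradient estimator; core of Theorem 2.) Let S, d, m be positive integers, f : Fin S → ℝ with f s > 0 and ∑_s f s = 1, for each s let N_s be a positive integer and v_{s,1}, …, v_{s,N_s} ∈ ℝ^d, let u_1, …, u_S ∈ ℝ^d with U = ∑_{s=1}^{S} u_s, and suppose for each s that (1/N_s) ∑_{i=1}^{N_s} ‖ v_{s,i} − (1/N_s) u_s ‖² ≤ ε_s². Let V = ∑_{s=1}^{S} ∑_{i=1}^{N_s} v_{s,i}. Consider m independent draws, where each draw j selects a shard s_j with probability f_{s_j} and then an index i_j uniformly from {1, …, N_{s_j}}. Then E‖ (1/m) ∑_{j=1}^{m} [ (1/(f_{s_j})) ( N_{s_j} v_{s_j, i_j} − u_{s_j} ) + U ] − V ‖² ≤ (1/m) ∑_{s=1}^{S} (N_s²/(f s)) ε_s². In particular, the variance of the CG-DSGLD estimator is controlled by the approximation quality constants ε_s² rather than the raw gradient bounds γ_s². -/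
lemma aux_prod {A : Type*} [Fintype A] (p : A → ℝ) (hp : ∑ a, p a = 1) (m : ℕ) :
    ∑ ω : Fin m → A, ∏ j, p (ω j) = 1 := by
  classical
  have h := Finset.prod_univ_sum (fun _ : Fin m => (Finset.univ : Finset A)) (fun _ a => p a)
  rw [Fintype.piFinset_univ] at h
  rw [← h]
  simp [hp]

lemma aux_var {A E : Type*} [Fintype A] [NormedAddCommGroup E] [InnerProductSpace ℝ E]
    (p : A → ℝ) (hp : ∑ a, p a = 1) (Y : A → E) (hY : ∑ a, p a • Y a = 0) (m : ℕ) :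
    ∑ ω : Fin m → A, (∏ j, p (ω j)) * ‖∑ j, Y (ω j)‖ ^ 2 = m * ∑ a, p a * ‖Y a‖ ^ 2 := by
  induction m with
  | zero => simp
  | succ n ih =>
    rw [← (Fin.consEquiv (fun _ : Fin (n+1) => A)).sum_comp, Fintype.sum_prod_type]
    simp only [Fin.consEquiv_apply, Fin.prod_univ_succ, Fin.sum_univ_succ, Fin.cons_zero,
      Fin.cons_succ]
    have h1 : ∀ a (ω : Fin n → A), p a * (∏ j, p (ω j)) * ‖Y a + ∑ j, Y (ω j)‖ ^ 2
        = (p a * ‖Y a‖ ^ 2) * (∏ j, p (ω j))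
          + 2 * ((∏ j, p (ω j)) * inner ℝ (p a • Y a) (∑ j, Y (ω j)))
          + p a * ((∏ j, p (ω j)) * ‖∑ j, Y (ω j)‖ ^ 2) := by
      intro a ω
      rw [norm_add_sq_real, real_inner_smul_left]
      ring
    have h2 : ∑ a, ∑ ω : Fin n → A,
        2 * ((∏ j, p (ω j)) * inner ℝ (p a • Y a) (∑ j, Y (ω j))) = 0 := by
      rw [Finset.sum_comm]
      refine Finset.sum_eq_zero fun ω _ => ?_
      rw [← Finset.mul_sum, ← Finset.mul_sum, ← sum_inner, hY]
      simp
    simp only [h1, Finset.sum_add_distrib, h2]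
    simp only [← Finset.mul_sum, aux_prod p hp, ih, ← Finset.sum_mul, hp]
    push_cast
    ring

lemma aux_center {A E : Type*} [Fintype A] [NormedAddCommGroup E] [InnerProductSpace ℝ E]
    (p : A → ℝ) (hp : ∑ a, p a = 1) (W : A → E) (M : E) (hW : ∑ a, p a • W a = M) :
    ∑ a, p a * ‖W a - M‖ ^ 2 ≤ ∑ a, p a * ‖W a‖ ^ 2 := by
  have h1 : ∀ a, p a * ‖W a - M‖ ^ 2
      = p a * ‖W a‖ ^ 2 - 2 * inner ℝ (p a • W a) M + p a * ‖M‖ ^ 2 := by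
    intro a
    rw [norm_sub_sq_real, real_inner_smul_left]
    ring
  simp only [h1, Finset.sum_add_distrib, Finset.sum_sub_distrib]
  rw [← Finset.mul_sum, ← sum_inner, hW, ← Finset.sum_mul, hp, real_inner_self_eq_norm_sq]
  nlinarith [sq_nonneg ‖M‖]


/-- Variance bound for the CG-DSGLD gradient estimator (core of Theorem 2). Each of
the `m` mini-batch elements is an independent draw `ω j = ⟨s_j, i_j⟩` selecting a
shard with probability `f s_j` and an index uniformly within it; the summand
`(1/f_{s_j}) (N_{s_j} v_{s_j,i_j} − u_{s_j}) + U` is an unbiased single-sample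
estimator of the full-data gradient `V`, and the variance is controlled by the
surrogate approximation constants `ε s`. -/
theorem cgdsgld_variance_bound (S d m : ℕ) (hS : 0 < S) (hd : 0 < d) (hm : 0 < m)
    (f : Fin S → ℝ) (hf : ∀ s, 0 < f s) (hsum : ∑ s, f s = 1)
    (N : Fin S → ℕ) (hN : ∀ s, 0 < N s)
    (v : (s : Fin S) → Fin (N s) → EuclideanSpace ℝ (Fin d))
    (u : Fin S → EuclideanSpace ℝ (Fin d))
    (U : EuclideanSpace ℝ (Fin d)) (hU : U = ∑ s, u s)
    (ε : Fin S → ℝ)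
    (hε : ∀ s, (1 / (N s : ℝ)) * ∑ i, ‖v s i - (1 / (N s : ℝ)) • u s‖ ^ 2 ≤ ε s ^ 2)
    (V : EuclideanSpace ℝ (Fin d)) (hV : V = ∑ s, ∑ i, v s i) :
    ∑ ω : Fin m → Σ s : Fin S, Fin (N s),
        (∏ j, f (ω j).1 * (1 / (N (ω j).1 : ℝ))) *
          ‖(1 / (m : ℝ)) •
              (∑ j, ((1 / f (ω j).1) •
                  ((N (ω j).1 : ℝ) • v (ω j).1 (ω j).2 - u (ω j).1) + U))
            - V‖ ^ 2
      ≤ (1 / (m : ℝ)) * ∑ s, ((N s : ℝ) ^ 2 / f s) * ε s ^ 2 := by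
  have hN' : ∀ s, (N s : ℝ) ≠ 0 := fun s => by exact_mod_cast (hN s).ne'
  have hf' : ∀ s, f s ≠ 0 := fun s => (hf s).ne'
  have hm' : (m : ℝ) ≠ 0 := by exact_mod_cast hm.ne'
  let p : (Σ s : Fin S, Fin (N s)) → ℝ := fun a => f a.1 * (1 / (N a.1 : ℝ))
  let W : (Σ s : Fin S, Fin (N s)) → EuclideanSpace ℝ (Fin d) :=
    fun a => (1 / f a.1) • ((N a.1 : ℝ) • v a.1 a.2 - u a.1)
  have hp : ∑ a, p a = 1 := by
    rw [Fintype.sum_sigma, ← hsum]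
    refine Finset.sum_congr rfl fun s _ => ?_
    have := hN' s
    simp only [p, Finset.sum_const, Finset.card_univ, Fintype.card_fin, nsmul_eq_mul]
    field_simp
  have hW : ∑ a, p a • W a = V - U := by
    rw [Fintype.sum_sigma, hV, hU, ← Finset.sum_sub_distrib]
    refine Finset.sum_congr rfl fun s _ => ?_
    have h1 := hN' s
    have h2 := hf' s
    have h3 : ∀ i, p ⟨s, i⟩ • W ⟨s, i⟩ = v s i - (1 / (N s : ℝ)) • u s := by
      intro i
      simp only [p, W, smul_smul, smul_sub]
      congr 1
      · rw [show f s * (1 / (N s : ℝ)) * (1 / f s * N s) = 1 by field_simp, one_smul]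
      · congr 1
        field_simp
    simp only [h3, Finset.sum_sub_distrib, Finset.sum_const, Finset.card_univ, Fintype.card_fin]
    rw [← Nat.cast_smul_eq_nsmul ℝ, smul_smul, mul_one_div_cancel h1, one_smul]
  have hY : ∑ a, p a • (W a - (V - U)) = 0 := by
    simp only [smul_sub (p _) (W _), Finset.sum_sub_distrib, hW, ← Finset.sum_smul, hp, one_smul,
      sub_self]
  have hvar := aux_var p hp (fun a => W a - (V - U)) hY m
  have hcen := aux_center p hp W (V - U) hW
  have hbound : ∑ a, p a * ‖W a‖ ^ 2 ≤ ∑ s, ((N s : ℝ) ^ 2 / f s) * ε s ^ 2 := by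
    rw [Fintype.sum_sigma]
    refine Finset.sum_le_sum fun s _ => ?_
    have h1 := hN' s
    have h2 := hf' s
    have h3 : ∀ i, p ⟨s, i⟩ * ‖W ⟨s, i⟩‖ ^ 2
        = ((N s : ℝ) ^ 2 / f s) * ((1 / (N s : ℝ)) * ‖v s i - (1 / (N s : ℝ)) • u s‖ ^ 2) := by
      intro i
      have h4 : W ⟨s, i⟩ = ((N s : ℝ) / f s) • (v s i - (1 / (N s : ℝ)) • u s) := by
        simp only [W, smul_smul, smul_sub]
        congr 2 <;> field_simp
      rw [h4, norm_smul, mul_pow, Real.norm_eq_abs, sq_abs]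
      simp only [p]
      field_simp
    simp only [h3, ← Finset.mul_sum]
    exact mul_le_mul_of_nonneg_left (hε s) (div_nonneg (sq_nonneg _) (hf s).le)
  have hterm : ∀ ω : Fin m → Σ s : Fin S, Fin (N s),
      (∏ j, f (ω j).1 * (1 / (N (ω j).1 : ℝ))) *
          ‖(1 / (m : ℝ)) •
              (∑ j, ((1 / f (ω j).1) •
                  ((N (ω j).1 : ℝ) • v (ω j).1 (ω j).2 - u (ω j).1) + U)) - V‖ ^ 2
        = (1 / (m : ℝ)) ^ 2 * ((∏ j, p (ω j)) * ‖∑ j, (W (ω j) - (V - U))‖ ^ 2) := by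
    intro ω
    have h5 : (1 / (m : ℝ)) • (∑ j, (W (ω j) + U)) - V
        = (1 / (m : ℝ)) • ∑ j, (W (ω j) - (V - U)) := by
      have h6 : ∑ j, (W (ω j) - (V - U)) = ∑ j, (W (ω j) + U) - (m : ℝ) • V := by
        have : ∀ j, W (ω j) - (V - U) = (W (ω j) + U) - V := fun j => by abel
        simp only [this]
        rw [Finset.sum_sub_distrib, Finset.sum_const, Finset.card_univ, Fintype.card_fin,
          Nat.cast_smul_eq_nsmul ℝ]
      rw [h6, smul_sub, smul_smul, one_div_mul_cancel hm', one_smul]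
    change (∏ j, p (ω j)) * ‖(1 / (m : ℝ)) • (∑ j, (W (ω j) + U)) - V‖ ^ 2 = _
    rw [h5, norm_smul, mul_pow, Real.norm_eq_abs, sq_abs]
    ring
  rw [Finset.sum_congr rfl fun ω _ => hterm ω, ← Finset.mul_sum, hvar]
  calc _ = (1 / (m : ℝ)) * ∑ a, p a * ‖W a - (V - U)‖ ^ 2 := by
        field_simp
    _ ≤ _ := mul_le_mul_of_nonneg_left (hcen.trans hbound) (by positivity)
end

section
/- (Supremum version of the Remark 3 bound.) Let N be a positive integer, let v_1, …, v_N : ℝ^D → ℝ^d and g : ℝ^D → ℝ^d be functions, and set V(θ) = ∑_{i=1}^{N} v_i(θ). Suppose the functions θ ↦ ‖g(θ) − V(θ)‖² and θ ↦ (1/N)‖V(θ)‖² + ∑_{i=1}^{N} ‖v_i(θ)‖² are bounded above. Then sup_θ (1/N) ∑_{i=1}^{N} ‖ v_i(θ) − (1/N) g(θ) ‖² ≤ (1/N²) sup_θ ‖ g(θ) − V(θ) ‖² + (1/N) sup_θ [ (1/N) ‖ V(θ) ‖² + ∑_{i=1}^{N} ‖ v_i(θ) ‖² ], and only the first term on the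 right-hand side depends on g. -/
/-- Supremum version of the Remark 3 bound: taking suprema over the parameter
`θ ∈ ℝ^D` (which exist by the boundedness hypotheses),
`sup_θ (1/N) ∑ i, ‖v i θ − (1/N) g θ‖²` is at most
`(1/N²) sup_θ ‖g θ − V θ‖² + (1/N) sup_θ [(1/N) ‖V θ‖² + ∑ i, ‖v i θ‖²]`,
and only the first term on the right-hand side depends on `g`. -/
theorem remark3_sup_bound (N D d : ℕ) (hN : 0 < N) (hD : 0 < D) (hd : 0 < d)
    (v : Fin N → EuclideanSpace ℝ (Fin D) → EuclideanSpace ℝ (Fin d))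
    (g : EuclideanSpace ℝ (Fin D) → EuclideanSpace ℝ (Fin d))
    (V : EuclideanSpace ℝ (Fin D) → EuclideanSpace ℝ (Fin d))
    (hV : ∀ θ, V θ = ∑ i, v i θ)
    (h1 : BddAbove (Set.range fun θ => ‖g θ - V θ‖ ^ 2))
    (h2 : BddAbove (Set.range fun θ =>
        (1 / (N : ℝ)) * ‖V θ‖ ^ 2 + ∑ i, ‖v i θ‖ ^ 2)) :
    (⨆ θ, (1 / (N : ℝ)) * ∑ i, ‖v i θ - (1 / (N : ℝ)) • g θ‖ ^ 2)
      ≤ (1 / (N : ℝ) ^ 2) * (⨆ θ, ‖g θ - V θ‖ ^ 2)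
          + (1 / (N : ℝ)) *
              ⨆ θ, ((1 / (N : ℝ)) * ‖V θ‖ ^ 2 + ∑ i, ‖v i θ‖ ^ 2) := by
  have hN' : (0 : ℝ) < N := by exact_mod_cast hN
  apply ciSup_le
  intro θ
  have a1 := le_ciSup h1 θ
  have a2 := le_ciSup h2 θ
  have key : ∑ i, ‖v i θ - (1 / (N : ℝ)) • g θ‖ ^ 2
      = ∑ i, ‖v i θ‖ ^ 2 + (1 / (N : ℝ)) * (‖g θ - V θ‖ ^ 2 - ‖V θ‖ ^ 2) := by
    have e : ∀ i, ‖v i θ - (1 / (N : ℝ)) • g θ‖ ^ 2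
        = ‖v i θ‖ ^ 2 - (2 / (N : ℝ)) * inner ℝ (v i θ) (g θ)
          + (1 / (N : ℝ)) ^ 2 * ‖g θ‖ ^ 2 := by
      intro i
      rw [norm_sub_sq_real, inner_smul_right, norm_smul, mul_pow, Real.norm_eq_abs, sq_abs]
      ring
    have hs : ∑ i, inner ℝ (v i θ) (g θ) = inner ℝ (g θ) (V θ) := by
      rw [hV, real_inner_comm, sum_inner]
    simp_rw [e]
    rw [Finset.sum_add_distrib, Finset.sum_sub_distrib, ← Finset.mul_sum, hs,
      norm_sub_sq_real (g θ) (V θ)]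
    simp only [Finset.sum_const, Finset.card_univ, Fintype.card_fin, nsmul_eq_mul]
    field_simp
    ring
  rw [key]
  have b1 := mul_le_mul_of_nonneg_left a1 (by positivity : (0 : ℝ) ≤ 1 / (N : ℝ) ^ 2)
  have b2 := mul_le_mul_of_nonneg_left a2 (by positivity : (0 : ℝ) ≤ 1 / (N : ℝ))
  have b3 : 0 ≤ 1 / (N : ℝ) ^ 2 * ‖V θ‖ ^ 2 := by positivity
  refine le_trans ?_ (add_le_add b1 b2)
  have b4 : 1 / (N : ℝ) * (∑ i, ‖v i θ‖ ^ 2 + 1 / (N : ℝ) * (‖g θ - V θ‖ ^ 2 - ‖V θ‖ ^ 2))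
      = 1 / (N : ℝ) ^ 2 * ‖g θ - V θ‖ ^ 2 + 1 / (N : ℝ) * (1 / (N : ℝ) * ‖V θ‖ ^ 2
        + ∑ i, ‖v i θ‖ ^ 2) - 2 * (1 / (N : ℝ) ^ 2 * ‖V θ‖ ^ 2) := by
    field_simp
    ring
  rw [b4]
  linarith
end
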